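/- Let Ω ⊆ ℝ² be open, let g, σ : Ω → (symmetric real 2×2 matrices) be C² with g(x) positive definite for all x, and let p ∈ Ω satisfy g(p) = I and ∂_k g_{ij}(p) = 0 for all i, j, k. Define tr_g σ = g^{ij} σ_{ij}, S_g σ = σ − (tr_g σ) g, raised components σ^{ij} = g^{ik} σ_{kl} g^{lj}, the covariant divergence of a matrix field (div_g σ)^i = ∂_j σ^{ij} + Γ^i_{lj} σ^{lj} + Γ^j_{jl} σ^{il}, and the covariant divergence of a vector field div_g v = (det g)^{−1/2} ∂_i ( √(det g) · v^i ). Then ( div_g div_g S_g σ )(p) = −inc σ(p) + ½ tr(σ(p)) · inc g(p), and consequently ( div_g div_g S_g σ )(p) = −(inc_g σ)(p). -/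

import Mathlib

noncomputable section

open Matrix BigOperators

abbrev Vec2 := Fin 2 → ℝ
abbrev Mat2 := Matrix (Fin 2) (Fin 2) ℝ

/-- The two-dimensional alternating symbol: `eps2 0 1 = 1`, `eps2 1 0 = -1`, `eps2 i i = 0`. -/
def eps2 (i j : Fin 2) : ℝ := (j.1 : ℝ) - (i.1 : ℝ)

/-- Euclidean rotated normal `ν = (-τ², τ¹)` of a vector `τ`. -/
def rot2 (τ : Vec2) : Vec2 := ![-(τ 1), τ 0]

/-- The `g`-rotated normal `ν̃^k = -g^{kj} ε_{ji} τ^i`. -/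
def gNormal (g : Mat2) (τ : Vec2) : Vec2 :=
  fun k => -∑ j, ∑ i, g⁻¹ k j * eps2 j i * τ i

/-- The `g`-unit tangent `τ̂ = τ / √(τᵀ g τ)`. -/
def gUnitTangent (g : Mat2) (τ : Vec2) : Vec2 :=
  (Real.sqrt (τ ⬝ᵥ g.mulVec τ))⁻¹ • τ

/-- The `g`-unit normal `n̂ = ν̃ / √(ν̃ᵀ g ν̃)`. -/
def gUnitNormal (g : Mat2) (τ : Vec2) : Vec2 :=
  (Real.sqrt (gNormal g τ ⬝ᵥ g.mulVec (gNormal g τ)))⁻¹ • gNormal g τ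

/-- Partial derivative `∂_i f (x)`. -/
def pd (i : Fin 2) (f : Vec2 → ℝ) (x : Vec2) : ℝ := fderiv ℝ f x (Pi.single i 1)

/-- Christoffel symbol of the first kind `Γ_{ijl} = ½(∂_i g_{jl} + ∂_j g_{li} - ∂_l g_{ij})`. -/
def Gamma1 (g : Vec2 → Mat2) (x : Vec2) (i j l : Fin 2) : ℝ :=
  (pd i (fun y => g y j l) x + pd j (fun y => g y l i) x - pd l (fun y => g y i j) x) / 2

/-- Christoffel symbol of the second kind `Γ^k_{ij} = g^{kl} Γ_{ijl}`. -/
def Gamma2 (g : Vec2 → Mat2) (x : Vec2) (i j k : Fin 2) : ℝ :=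
  ∑ l, (g x)⁻¹ k l * Gamma1 g x i j l

/-- Euclidean incompatibility `inc σ = ∂₁∂₁σ₂₂ - 2 ∂₁∂₂σ₁₂ + ∂₂∂₂σ₁₁`. -/
def incE (σ : Vec2 → Mat2) (x : Vec2) : ℝ :=
  pd 0 (pd 0 (fun y => σ y 1 1)) x - 2 * pd 0 (pd 1 (fun y => σ y 0 1)) x
    + pd 1 (pd 1 (fun y => σ y 0 0)) x

/-- Covariant curl `(curl_g σ)_i = (det g)^{-1/2} ε^{jk}(∂_j σ_{ik} - Γ^m_{ji} σ_{mk})`. -/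
def curlg (g σ : Vec2 → Mat2) (x : Vec2) (i : Fin 2) : ℝ :=
  (Real.sqrt (g x).det)⁻¹ * ∑ j, ∑ k, eps2 j k *
    (pd j (fun y => σ y i k) x - ∑ m, Gamma2 g x j i m * σ x m k)

/-- Covariant incompatibility `inc_g σ`. -/
def incg (g σ : Vec2 → Mat2) (x : Vec2) : ℝ :=
  ((g x).det)⁻¹ *
    ((∑ q, ∑ i, ∑ j, ∑ k, eps2 q i * eps2 j k * pd j (pd q (fun y => σ y i k)) x)
      - (∑ q, ∑ i, ∑ j, ∑ k, eps2 q i * eps2 j k *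
          pd q (fun y => ∑ m, Gamma2 g y j i m * σ y m k) x)
      - (∑ q, ∑ i, ∑ j, ∑ k, (∑ l, Gamma2 g x l q l) * eps2 q i * eps2 j k *
          (pd j (fun y => σ y i k) x - ∑ m, Gamma2 g x j i m * σ x m k)))

/-- Coordinate Riemann component `R₁₂₂₁ = ∂₁Γ₂₂₁ - ∂₂Γ₁₂₁ - Γ₁₁ₚΓᵖ₂₂ + Γ₂₁ₚΓᵖ₁₂`. -/
def R1221 (g : Vec2 → Mat2) (x : Vec2) : ℝ :=
  pd 0 (fun y => Gamma1 g y 1 1 0) x - pd 1 (fun y => Gamma1 g y 0 1 0) x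
    - (∑ p, Gamma1 g x 0 0 p * Gamma2 g x 1 1 p)
    + (∑ p, Gamma1 g x 1 0 p * Gamma2 g x 0 1 p)

/-- `tr_g σ = g^{ij} σ_{ij}`. -/
def trg (g σ : Vec2 → Mat2) (x : Vec2) : ℝ := ∑ i, ∑ j, (g x)⁻¹ i j * σ x i j

/-- Raised components `(S_g σ)^{ij} = g^{ik}(σ - (tr_g σ) g)_{kl} g^{lj}`. -/
def SgUp (g σ : Vec2 → Mat2) (x : Vec2) (i j : Fin 2) : ℝ :=
  ∑ k, ∑ l, (g x)⁻¹ i k * (σ x k l - trg g σ x * g x k l) * (g x)⁻¹ l j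

/-- Covariant divergence `(div_g S_g σ)^i = ∂_j S^{ij} + Γ^i_{lj} S^{lj} + Γ^j_{jl} S^{il}`. -/
def divgSg (g σ : Vec2 → Mat2) (x : Vec2) (i : Fin 2) : ℝ :=
  (∑ j, pd j (fun y => SgUp g σ y i j) x)
    + (∑ l, ∑ j, Gamma2 g x l j i * SgUp g σ x l j)
    + ∑ j, ∑ l, Gamma2 g x j l j * SgUp g σ x i l

/-- Covariant divergence of the vector field `div_g S_g σ`:
`div_g v = (det g)^{-1/2} ∂_i (√(det g) v^i)`. -/
def divgdivgSg (g σ : Vec2 → Mat2) (x : Vec2) : ℝ :=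
  (Real.sqrt (g x).det)⁻¹ *
    ∑ i, pd i (fun y => Real.sqrt (g y).det * divgSg g σ y i) x

open Filter Topology in
lemma pd_congr {f h : Vec2 → ℝ} {p : Vec2} (i : Fin 2) (e : f =ᶠ[𝓝 p] h) : pd i f p = pd i h p := by
  unfold pd; rw [e.fderiv_eq]

open Filter Topology in
lemma pd_congr2 {f h : Vec2 → ℝ} {p : Vec2} (k i : Fin 2) (e : f =ᶠ[𝓝 p] h) :
    pd k (pd i f) p = pd k (pd i h) p := by
  apply pd_congr
  filter_upwards [e.eventuallyEq_nhds] with y hy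
  exact pd_congr i hy

lemma pd_add {f h : Vec2 → ℝ} {p : Vec2} (i : Fin 2) (hf : DifferentiableAt ℝ f p)
    (hh : DifferentiableAt ℝ h p) : pd i (fun y => f y + h y) p = pd i f p + pd i h p := by
  unfold pd; rw [fderiv_fun_add hf hh]; rfl

lemma pd_sub {f h : Vec2 → ℝ} {p : Vec2} (i : Fin 2) (hf : DifferentiableAt ℝ f p)
    (hh : DifferentiableAt ℝ h p) : pd i (fun y => f y - h y) p = pd i f p - pd i h p := by
  unfold pd; rw [fderiv_fun_sub hf hh]; rfl

lemma pd_neg {f : Vec2 → ℝ} {p : Vec2} (i : Fin 2) :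
    pd i (fun y => - f y) p = - pd i f p := by
  unfold pd; rw [fderiv_fun_neg]; rfl

lemma pd_mul {f h : Vec2 → ℝ} {p : Vec2} (i : Fin 2) (hf : DifferentiableAt ℝ f p)
    (hh : DifferentiableAt ℝ h p) :
    pd i (fun y => f y * h y) p = f p * pd i h p + h p * pd i f p := by
  unfold pd; rw [fderiv_fun_mul hf hh]; simp

lemma pd_div_two {f : Vec2 → ℝ} {p : Vec2} (i : Fin 2) (hf : DifferentiableAt ℝ f p) :
    pd i (fun y => f y / 2) p = pd i f p / 2 := by
  simp only [div_eq_mul_inv]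
  rw [pd_mul i hf (by fun_prop)]
  simp [pd]; ring

lemma pd_contDiffAt {f : Vec2 → ℝ} {p : Vec2} (i : Fin 2) (hf : ContDiffAt ℝ 2 f p) :
    ContDiffAt ℝ 1 (pd i f) p := by
  have h := hf.fderiv_right (m := 1) (by norm_num)
  exact h.clm_apply contDiffAt_const

lemma pd_comm {f : Vec2 → ℝ} {p : Vec2} (hf : ContDiffAt ℝ 2 f p) :
    pd 1 (pd 0 f) p = pd 0 (pd 1 f) p := by
  have h := hf.fderiv_right (m := 1) (by norm_num)
  have hd := h.differentiableAt (by norm_num)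
  have hs := hf.isSymmSndFDerivAt (by simp)
  have key : ∀ i j : Fin 2, pd i (pd j f) p
      = fderiv ℝ (fderiv ℝ f) p (Pi.single i 1) (Pi.single j 1) := by
    intro i j
    have : pd j f = fun y => fderiv ℝ f y (Pi.single j 1) := rfl
    rw [this, pd, fderiv_clm_apply hd (by fun_prop)]
    simp
  rw [key, key]
  exact hs _ _

lemma c2_ev {f : Vec2 → ℝ} {p : Vec2} (hf : ContDiffAt ℝ 2 f p) :
    ∀ᶠ y in nhds p, DifferentiableAt ℝ f y := by
  filter_upwards [hf.eventually (by simp)] with y hy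
  exact hy.differentiableAt (by norm_num)

lemma pd_diff {f : Vec2 → ℝ} {p : Vec2} (i : Fin 2) (hf : ContDiffAt ℝ 2 f p) :
    DifferentiableAt ℝ (pd i f) p := (pd_contDiffAt i hf).differentiableAt (by norm_num)

lemma pd2_mul {f h : Vec2 → ℝ} {p : Vec2} (k i : Fin 2) (hf : ContDiffAt ℝ 2 f p)
    (hh : ContDiffAt ℝ 2 h p) :
    pd k (pd i (fun y => f y * h y)) p = f p * pd k (pd i h) p + pd i h p * pd k f p
      + (h p * pd k (pd i f) p + pd i f p * pd k h p) := by
  have e : pd i (fun y => f y * h y) =ᶠ[nhds p] fun y => f y * pd i h y + h y * pd i f y := by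
    filter_upwards [c2_ev hf, c2_ev hh] with y h1 h2
    exact pd_mul i h1 h2
  have df := hf.differentiableAt (by norm_num)
  have dh := hh.differentiableAt (by norm_num)
  have pf := pd_diff i hf
  have ph := pd_diff i hh
  rw [pd_congr k e, pd_add k (df.fun_mul ph) (dh.fun_mul pf), pd_mul k df ph, pd_mul k dh pf]

lemma pd2_sub {f h : Vec2 → ℝ} {p : Vec2} (k i : Fin 2) (hf : ContDiffAt ℝ 2 f p)
    (hh : ContDiffAt ℝ 2 h p) :
    pd k (pd i (fun y => f y - h y)) p = pd k (pd i f) p - pd k (pd i h) p := by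
  have e : pd i (fun y => f y - h y) =ᶠ[nhds p] fun y => pd i f y - pd i h y := by
    filter_upwards [c2_ev hf, c2_ev hh] with y h1 h2
    exact pd_sub i h1 h2
  rw [pd_congr k e, pd_sub k (pd_diff i hf) (pd_diff i hh)]

lemma pd2_neg {f : Vec2 → ℝ} {p : Vec2} (k i : Fin 2) :
    pd k (pd i (fun y => - f y)) p = - pd k (pd i f) p := by
  have e : pd i (fun y => - f y) = fun y => - pd i f y := by
    funext y; exact pd_neg i
  rw [e, pd_neg]

/-- The cofactor-type matrix `ε^{ik} ε^{jl} σ_{kl}`. -/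
def cofM (σ : Vec2 → Mat2) (i j : Fin 2) (y : Vec2) : ℝ :=
  ∑ k, ∑ l, eps2 i k * eps2 j l * σ y k l

lemma inv_entry (M : Mat2) : M⁻¹ = !![M.det⁻¹ * M 1 1, M.det⁻¹ * (-M 0 1);
    M.det⁻¹ * (-M 1 0), M.det⁻¹ * M 0 0] := by
  rw [Matrix.inv_def, Matrix.adjugate_fin_two, Ring.inverse_eq_inv]
  ext i j; fin_cases i <;> fin_cases j <;> simp

lemma SgUp_eq (g σ : Vec2 → Mat2) (y : Vec2) (h1 : g y 1 0 = g y 0 1) (h2 : σ y 1 0 = σ y 0 1)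
    (hD : (g y).det ≠ 0) (i j : Fin 2) :
    SgUp g σ y i j = -(((g y).det)⁻¹ * cofM σ i j y) := by
  unfold SgUp trg cofM eps2
  rw [inv_entry]
  have hD2 := Matrix.det_fin_two (g y)
  rw [hD2, h1] at hD
  rw [hD2]
  simp only [Fin.sum_univ_two, h1, h2]
  generalize g y 0 0 = a at *
  generalize g y 0 1 = b at *
  generalize g y 1 1 = c at *
  have hD3 : a * c - b ^ 2 ≠ 0 := by rwa [pow_two]
  fin_cases i <;> fin_cases j <;> simp <;> field_simp <;> ring

lemma inv_contDiffAt {g : Vec2 → Mat2} {p : Vec2} {n : WithTop ℕ∞}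
    (hg : ∀ i j, ContDiffAt ℝ n (fun y => g y i j) p)
    (hE : ContDiffAt ℝ n (fun y => (g y).det⁻¹) p) (i j : Fin 2) :
    ContDiffAt ℝ n (fun y => (g y)⁻¹ i j) p := by
  simp only [inv_entry]
  fin_cases i <;> fin_cases j <;> simp
  · exact hE.mul (hg 1 1)
  · exact (hE.mul (hg 0 1)).neg
  · exact (hE.mul (hg 1 0)).neg
  · exact hE.mul (hg 0 0)

lemma Gamma1_contDiffAt {g : Vec2 → Mat2} {p : Vec2}
    (hg : ∀ i j, ContDiffAt ℝ 2 (fun y => g y i j) p) (i j l : Fin 2) :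
    ContDiffAt ℝ 1 (fun y => Gamma1 g y i j l) p := by
  unfold Gamma1
  exact (((pd_contDiffAt i (hg j l)).add (pd_contDiffAt j (hg l i))).sub
    (pd_contDiffAt l (hg i j))).div_const 2

lemma Gamma2_contDiffAt {g : Vec2 → Mat2} {p : Vec2}
    (hg : ∀ i j, ContDiffAt ℝ 2 (fun y => g y i j) p)
    (hE : ContDiffAt ℝ 2 (fun y => (g y).det⁻¹) p) (i j k : Fin 2) :
    ContDiffAt ℝ 1 (fun y => Gamma2 g y i j k) p := by
  unfold Gamma2
  simp only [Fin.sum_univ_two]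
  have h12 : (1 : WithTop ℕ∞) ≤ 2 := by norm_num
  exact (((inv_contDiffAt hg hE k 0).of_le h12).mul (Gamma1_contDiffAt hg i j 0)).add
    (((inv_contDiffAt hg hE k 1).of_le h12).mul (Gamma1_contDiffAt hg i j 1))

lemma pd_Gamma1 {g : Vec2 → Mat2} {p : Vec2}
    (hg : ∀ i j, ContDiffAt ℝ 2 (fun y => g y i j) p) (q i j l : Fin 2) :
    pd q (fun y => Gamma1 g y i j l) p =
      (pd q (pd i (fun y => g y j l)) p + pd q (pd j (fun y => g y l i)) p
        - pd q (pd l (fun y => g y i j)) p) / 2 := by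
  unfold Gamma1
  have d1 := pd_diff i (hg j l)
  have d2 := pd_diff j (hg l i)
  have d3 := pd_diff l (hg i j)
  rw [pd_div_two q ((d1.fun_add d2).fun_sub d3), pd_sub q (d1.fun_add d2) d3, pd_add q d1 d2]

/-- Product rule when the first factor vanishes at the point. -/
lemma pd_mul_zero {f h : Vec2 → ℝ} {p : Vec2} (i : Fin 2) (hf : DifferentiableAt ℝ f p)
    (hh : DifferentiableAt ℝ h p) (h0 : f p = 0) :
    pd i (fun y => f y * h y) p = h p * pd i f p := by
  rw [pd_mul i hf hh, h0]; ring

lemma pd_Gamma2 {g : Vec2 → Mat2} {p : Vec2}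
    (hg : ∀ i j, ContDiffAt ℝ 2 (fun y => g y i j) p)
    (hE : ContDiffAt ℝ 2 (fun y => (g y).det⁻¹) p) (hgp : g p = 1)
    (h0 : ∀ i j l, Gamma1 g p i j l = 0) (q i j k : Fin 2) :
    pd q (fun y => Gamma2 g y i j k) p = pd q (fun y => Gamma1 g y i j k) p := by
  unfold Gamma2
  simp only [Fin.sum_univ_two]
  have a0 := (inv_contDiffAt hg hE k 0).differentiableAt (by norm_num)
  have a1 := (inv_contDiffAt hg hE k 1).differentiableAt (by norm_num)
  have b0 := (Gamma1_contDiffAt hg i j 0).differentiableAt (by norm_num)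
  have b1 := (Gamma1_contDiffAt hg i j 1).differentiableAt (by norm_num)
  rw [pd_add q (a0.fun_mul b0) (a1.fun_mul b1), pd_mul q a0 b0, pd_mul q a1 b1, h0, h0, hgp]
  fin_cases k <;> simp

/-- `div_g div_g S_g σ = -inc σ + ½ tr σ inc g = -inc_g σ` in
Riemann normal coordinates. -/
theorem divgdivgSg_normal_coords
    (Ω : Set Vec2) (hΩ : IsOpen Ω)
    (g σ : Vec2 → Mat2)
    (hg : ∀ i j, ContDiffOn ℝ 2 (fun y => g y i j) Ω)
    (hσ : ∀ i j, ContDiffOn ℝ 2 (fun y => σ y i j) Ω)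
    (hg_symm : ∀ x ∈ Ω, (g x).IsSymm) (hσ_symm : ∀ x ∈ Ω, (σ x).IsSymm)
    (hg_pos : ∀ x ∈ Ω, (g x).PosDef)
    (p : Vec2) (hp : p ∈ Ω) (hgp : g p = 1)
    (hdg : ∀ i j k, pd k (fun y => g y i j) p = 0) :
    divgdivgSg g σ p = -incE σ p + 1 / 2 * (σ p).trace * incE g p ∧
    divgdivgSg g σ p = -incg g σ p := by
  have hΩp : Ω ∈ nhds p := hΩ.mem_nhds hp
  have cg : ∀ i j, ContDiffAt ℝ 2 (fun y => g y i j) p := fun i j => (hg i j).contDiffAt hΩp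
  have cs : ∀ i j, ContDiffAt ℝ 2 (fun y => σ y i j) p := fun i j => (hσ i j).contDiffAt hΩp
  have eg : (fun y => g y 1 0) =ᶠ[nhds p] (fun y => g y 0 1) := by
    filter_upwards [hΩp] with y hy
    exact (hg_symm y hy).apply 0 1
  have es : (fun y => σ y 1 0) =ᶠ[nhds p] (fun y => σ y 0 1) := by
    filter_upwards [hΩp] with y hy
    exact (hσ_symm y hy).apply 0 1
  have gsym : ∀ k l, pd k (pd l (fun y => g y 1 0)) p = pd k (pd l (fun y => g y 0 1)) p :=
    fun k l => pd_congr2 k l eg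
  have ssym : ∀ k l, pd k (pd l (fun y => σ y 1 0)) p = pd k (pd l (fun y => σ y 0 1)) p :=
    fun k l => pd_congr2 k l es
  have gcom : ∀ i j, pd 1 (pd 0 (fun y => g y i j)) p = pd 0 (pd 1 (fun y => g y i j)) p :=
    fun i j => pd_comm (cg i j)
  have scom : ∀ i j, pd 1 (pd 0 (fun y => σ y i j)) p = pd 0 (pd 1 (fun y => σ y i j)) p :=
    fun i j => pd_comm (cs i j)
  have sp : σ p 1 0 = σ p 0 1 := es.eq_of_nhds
  -- determinant
  have cD : ContDiffAt ℝ 2 (fun y => (g y).det) p := by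
    simp only [Matrix.det_fin_two]
    exact ((cg 0 0).mul (cg 1 1)).sub ((cg 0 1).mul (cg 1 0))
  have hD1 : (g p).det = 1 := by rw [hgp]; simp
  have g00 : g p 0 0 = 1 := by rw [hgp]; simp
  have g11 : g p 1 1 = 1 := by rw [hgp]; simp
  have g01 : g p 0 1 = 0 := by rw [hgp]; simp
  have g10 : g p 1 0 = 0 := by rw [hgp]; simp
  have dg : ∀ i j, DifferentiableAt ℝ (fun y => g y i j) p :=
    fun i j => (cg i j).differentiableAt (by norm_num)
  have ds : ∀ i j, DifferentiableAt ℝ (fun y => σ y i j) p :=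
    fun i j => (cs i j).differentiableAt (by norm_num)
  have dD := cD.differentiableAt (by norm_num)
  have pD : ∀ k, pd k (fun y => (g y).det) p = 0 := by
    intro k
    simp only [Matrix.det_fin_two]
    rw [pd_sub k ((dg 0 0).fun_mul (dg 1 1)) ((dg 0 1).fun_mul (dg 1 0)),
      pd_mul k (dg 0 0) (dg 1 1), pd_mul k (dg 0 1) (dg 1 0)]
    simp only [hdg]; ring
  have p2D : ∀ k l, pd k (pd l (fun y => (g y).det)) p =
      pd k (pd l (fun y => g y 0 0)) p + pd k (pd l (fun y => g y 1 1)) p := by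
    intro k l
    simp only [Matrix.det_fin_two]
    rw [pd2_sub k l ((cg 0 0).mul (cg 1 1)) ((cg 0 1).mul (cg 1 0)),
      pd2_mul k l (cg 0 0) (cg 1 1), pd2_mul k l (cg 0 1) (cg 1 0)]
    simp only [hdg, g00, g11, g01, g10]; ring
  have cE : ContDiffAt ℝ 2 (fun y => (g y).det⁻¹) p := cD.inv (by rw [hD1]; exact one_ne_zero)
  have dE := cE.differentiableAt (by norm_num)
  have eED : (fun y => (g y).det⁻¹ * (g y).det) =ᶠ[nhds p] (fun _ => (1 : ℝ)) := by
    filter_upwards [hΩp] with y hy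
    exact inv_mul_cancel₀ (hg_pos y hy).det_pos.ne'
  have pE : ∀ k, pd k (fun y => (g y).det⁻¹) p = 0 := by
    intro k
    have h := pd_congr k eED
    rw [pd_mul k dE dD, pD, hD1] at h
    simpa [pd] using h
  have p2E : ∀ k l, pd k (pd l (fun y => (g y).det⁻¹)) p =
      -(pd k (pd l (fun y => g y 0 0)) p + pd k (pd l (fun y => g y 1 1)) p) := by
    intro k l
    have h := pd_congr2 k l eED
    have hz : pd k (pd l (fun _ : Vec2 => (1 : ℝ))) p = 0 := by
      have : pd l (fun _ : Vec2 => (1 : ℝ)) = fun _ => 0 := by funext y; simp [pd]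
      rw [this]; simp [pd]
    rw [pd2_mul k l cE cD, hz, pD, pD, pE, pE, hD1, p2D] at h
    simp only [inv_one] at h
    linarith
  -- Christoffel symbols
  have G1 : ∀ i j l, Gamma1 g p i j l = 0 := by
    intro i j l; simp [Gamma1, hdg]
  have G2 : ∀ i j l, Gamma2 g p i j l = 0 := by
    intro i j l; simp [Gamma2, G1]
  have dG2 : ∀ i j l, DifferentiableAt ℝ (fun y => Gamma2 g y i j l) p :=
    fun i j l => (Gamma2_contDiffAt cg cE i j l).differentiableAt (by norm_num)
  have pG2 : ∀ q i j k, pd q (fun y => Gamma2 g y i j k) p =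
      (pd q (pd i (fun y => g y j k)) p + pd q (pd j (fun y => g y k i)) p
        - pd q (pd k (fun y => g y i j)) p) / 2 := by
    intro q i j k
    rw [pd_Gamma2 cg cE hgp G1, pd_Gamma1 cg]
  -- the tensor S
  have eS : ∀ i j, (fun y => SgUp g σ y i j) =ᶠ[nhds p]
      (fun y => -((g y).det⁻¹ * cofM σ i j y)) := by
    intro i j
    filter_upwards [hΩp] with y hy
    exact SgUp_eq g σ y ((hg_symm y hy).apply 0 1) ((hσ_symm y hy).apply 0 1)
      (hg_pos y hy).det_pos.ne' i j
  have cC : ∀ i j, ContDiffAt ℝ 2 (cofM σ i j) p := by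
    intro i j
    unfold cofM
    exact ContDiffAt.sum fun k _ => ContDiffAt.sum fun l _ => contDiffAt_const.mul (cs k l)
  have cS : ∀ i j, ContDiffAt ℝ 2 (fun y => SgUp g σ y i j) p :=
    fun i j => ((cE.mul (cC i j)).neg).congr_of_eventuallyEq (eS i j)
  have dS : ∀ i j, DifferentiableAt ℝ (fun y => SgUp g σ y i j) p :=
    fun i j => (cS i j).differentiableAt (by norm_num)
  have vS : ∀ i j, SgUp g σ p i j = - cofM σ i j p := by
    intro i j
    have h := (eS i j).eq_of_nhds
    simp only [hD1] at h
    rw [h]; ring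
  have p2S : ∀ k l i j, pd k (pd l (fun y => SgUp g σ y i j)) p =
      -(pd k (pd l (cofM σ i j)) p) + cofM σ i j p *
      (pd k (pd l (fun y => g y 0 0)) p + pd k (pd l (fun y => g y 1 1)) p) := by
    intro k l i j
    rw [pd_congr2 k l (eS i j), pd2_neg, pd2_mul k l cE (cC i j), p2E, pE, pE, hD1]
    ring
  have C00 : cofM σ 0 0 = fun y => σ y 1 1 := by
    funext y; simp [cofM, eps2, Fin.sum_univ_two]
  have C11 : cofM σ 1 1 = fun y => σ y 0 0 := by
    funext y; simp [cofM, eps2, Fin.sum_univ_two]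
  have C01 : cofM σ 0 1 = fun y => - σ y 1 0 := by
    funext y; simp [cofM, eps2, Fin.sum_univ_two]
  have C10 : cofM σ 1 0 = fun y => - σ y 0 1 := by
    funext y; simp [cofM, eps2, Fin.sum_univ_two]
  -- the divergence
  have dpS : ∀ k i j, DifferentiableAt ℝ (pd k (fun y => SgUp g σ y i j)) p :=
    fun k i j => pd_diff k (cS i j)
  have dGS : ∀ a b c i j, DifferentiableAt ℝ (fun y => Gamma2 g y a b c * SgUp g σ y i j) p :=
    fun a b c i j => (dG2 a b c).fun_mul (dS i j)
  have pGS : ∀ q a b c i j, pd q (fun y => Gamma2 g y a b c * SgUp g σ y i j) p =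
      SgUp g σ p i j * pd q (fun y => Gamma2 g y a b c) p :=
    fun q a b c i j => pd_mul_zero q (dG2 a b c) (dS i j) (G2 a b c)
  have dv : ∀ i, DifferentiableAt ℝ (fun y => divgSg g σ y i) p := by
    intro i
    simp only [divgSg, Fin.sum_univ_two]
    exact (((dpS 0 i 0).fun_add (dpS 1 i 1)).fun_add
      (((dGS _ _ _ _ _).fun_add (dGS _ _ _ _ _)).fun_add
        ((dGS _ _ _ _ _).fun_add (dGS _ _ _ _ _)))).fun_add
      (((dGS _ _ _ _ _).fun_add (dGS _ _ _ _ _)).fun_add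
        ((dGS _ _ _ _ _).fun_add (dGS _ _ _ _ _)))
  have pv : ∀ q i, pd q (fun y => divgSg g σ y i) p =
      (∑ j, pd q (pd j (fun y => SgUp g σ y i j)) p)
      + (∑ l, ∑ j, SgUp g σ p l j * pd q (fun y => Gamma2 g y l j i) p)
      + ∑ j, ∑ l, SgUp g σ p i l * pd q (fun y => Gamma2 g y j l j) p := by
    intro q i
    simp only [divgSg, Fin.sum_univ_two]
    have two : ∀ a b c i j a' b' c' i' j',
        DifferentiableAt ℝ (fun y => Gamma2 g y a b c * SgUp g σ y i j
          + Gamma2 g y a' b' c' * SgUp g σ y i' j') p :=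
      fun a b c i j a' b' c' i' j' => (dGS _ _ _ _ _).fun_add (dGS _ _ _ _ _)
    rw [pd_add q (((dpS 0 i 0).fun_add (dpS 1 i 1)).fun_add
        ((two _ _ _ _ _ _ _ _ _ _).fun_add (two _ _ _ _ _ _ _ _ _ _)))
        ((two _ _ _ _ _ _ _ _ _ _).fun_add (two _ _ _ _ _ _ _ _ _ _)),
      pd_add q ((dpS 0 i 0).fun_add (dpS 1 i 1))
        ((two _ _ _ _ _ _ _ _ _ _).fun_add (two _ _ _ _ _ _ _ _ _ _)),
      pd_add q (dpS 0 i 0) (dpS 1 i 1),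
      pd_add q (two _ _ _ _ _ _ _ _ _ _) (two _ _ _ _ _ _ _ _ _ _),
      pd_add q (two _ _ _ _ _ _ _ _ _ _) (two _ _ _ _ _ _ _ _ _ _),
      pd_add q (dGS _ _ _ _ _) (dGS _ _ _ _ _),
      pd_add q (dGS _ _ _ _ _) (dGS _ _ _ _ _),
      pd_add q (dGS _ _ _ _ _) (dGS _ _ _ _ _),
      pd_add q (dGS _ _ _ _ _) (dGS _ _ _ _ _)]
    simp only [pGS]
  have dsq : DifferentiableAt ℝ (fun y => Real.sqrt (g y).det) p :=
    dD.sqrt (by rw [hD1]; exact one_ne_zero)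
  have psq : ∀ k, pd k (fun y => Real.sqrt (g y).det) p = 0 := by
    intro k
    have e : (fun y => Real.sqrt (g y).det * Real.sqrt (g y).det) =ᶠ[nhds p]
        (fun y => (g y).det) := by
      filter_upwards [hΩp] with y hy
      exact Real.mul_self_sqrt (hg_pos y hy).det_pos.le
    have h := pd_congr k e
    rw [pd_mul k dsq dsq, pD, hD1, Real.sqrt_one] at h
    linarith
  have key : divgdivgSg g σ p = pd 0 (fun y => divgSg g σ y 0) p
      + pd 1 (fun y => divgSg g σ y 1) p := by
    simp only [divgdivgSg, Fin.sum_univ_two]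
    rw [pd_mul 0 dsq (dv 0), pd_mul 1 dsq (dv 1), psq, psq, hD1, Real.sqrt_one]
    ring
  have main : divgdivgSg g σ p = -incE σ p + 1 / 2 * (σ p).trace * incE g p := by
    rw [key, pv, pv]
    simp only [Fin.sum_univ_two, p2S, vS, pG2, C00, C11, C01, C10, pd2_neg, gsym, ssym, gcom,
      scom, sp, incE, Matrix.trace_fin_two]
    ring
  refine ⟨main, ?_⟩
  have dGs : ∀ a b c i j, DifferentiableAt ℝ (fun y => Gamma2 g y a b c * σ y i j) p :=
    fun a b c i j => (dG2 a b c).fun_mul (ds i j)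
  have pGs : ∀ q j i k, pd q (fun y => ∑ m, Gamma2 g y j i m * σ y m k) p =
      ∑ m, σ p m k * pd q (fun y => Gamma2 g y j i m) p := by
    intro q j i k
    simp only [Fin.sum_univ_two]
    rw [pd_add q (dGs _ _ _ _ _) (dGs _ _ _ _ _), pd_mul_zero q (dG2 _ _ _) (ds _ _) (G2 _ _ _),
      pd_mul_zero q (dG2 _ _ _) (ds _ _) (G2 _ _ _)]
  rw [main]
  simp only [incg, pGs, G2, hD1]
  simp only [Fin.sum_univ_two, pG2, gsym, ssym, gcom, scom, sp, incE, Matrix.trace_fin_two]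
  simp [eps2]
  ring
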